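/- Let (ℋ, 𝒜, ⟨·,·⟩_𝒜) and (ℋ, ℬ, ⟨·,·⟩_ℬ) be two Hilbert C*-modules over unital C*-algebras 𝒜 and ℬ (on the same underlying space ℋ), let φ : 𝒜 → ℬ be a ∗-homomorphism, and let θ : ℋ → ℋ be a map such that ⟨θx, θy⟩_ℬ = φ(⟨x, y⟩_𝒜) for all x, y ∈ ℋ. Let C, C' ∈ GL⁺(ℋ) and suppose {T_i}_{i∈I} ⊆ End*_𝒜(ℋ) is a (C,C')-controlled ∗-operator frame for (ℋ, 𝒜, ⟨·,·⟩_𝒜) with bounds A and B. If θ is surjective, θT_i = T_iθ for every i ∈ I, θC = Cθ and θC' = C'θ, then {T_i}_{i∈I} is a (C,C')-controlled ∗-operator frame for (ℋ, ℬ, ⟨·,·⟩_ℬ) with bounds φ(A) and φ(B), i.e. φ(A) ⟨y,y⟩_ℬ (φ(A))* ≤ Σ_{i∈I} ⟨T_i C y, T_i C' y⟩_ℬ ≤ φ(B) ⟨y,y⟩_ℬ (φ(B))* for all y ∈ ℋ. -/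

import Mathlib

open scoped ComplexOrder

/-- A `(C, C')`-controlled ∗-operator frame with bounds `a` and `b`, for an arbitrary `R`-valued
kernel `K` in the role of the inner product. Nonvanishing of the bounds is left out of the notion,
because a ∗-homomorphism need not preserve it. -/
structure IsControlledStarOperatorFrame {R X I : Type*} [NonUnitalNonAssocSemiring R] [Star R]
    [TopologicalSpace R] [LE R] (K : X → X → R) (T : I → X → X) (C C' : X → X) (a b : R) :
    Prop where
  summable (x : X) : Summable fun i => K (T i (C x)) (T i (C' x))
  lower_bound (x : X) : a * K x x * star a ≤ ∑' i, K (T i (C x)) (T i (C' x))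
  upper_bound (x : X) : ∑' i, K (T i (C x)) (T i (C' x)) ≤ b * K x x * star b

section Transfer

variable {R S F X Y I : Type*} [FunLike F R S] {φ : F} {θ : X → Y}
  {K : X → X → R} {L : Y → Y → S} {T : I → X → X} {U : I → Y → Y} {C C' : X → X} {D D' : Y → Y}

theorem kernel_apply_of_semiconj (hK : ∀ x y, L (θ x) (θ y) = φ (K x y))
    (hT : ∀ i, Function.Semiconj θ (T i) (U i)) (hC : Function.Semiconj θ C D)
    (hC' : Function.Semiconj θ C' D') (i : I) (x : X) :
    L (U i (D (θ x))) (U i (D' (θ x))) = φ (K (T i (C x)) (T i (C' x))) := by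
  rw [← hC.eq, ← hC'.eq, ← (hT i).eq, ← (hT i).eq, hK]

variable [NonUnitalNonAssocSemiring R] [NonUnitalNonAssocSemiring S]
  [TopologicalSpace R] [TopologicalSpace S] [NonUnitalRingHomClass F R S]

theorem hasSum_kernel_of_semiconj (hφ : Continuous φ) (hK : ∀ x y, L (θ x) (θ y) = φ (K x y))
    (hT : ∀ i, Function.Semiconj θ (T i) (U i)) (hC : Function.Semiconj θ C D)
    (hC' : Function.Semiconj θ C' D') {x : X} {r : R}
    (hr : HasSum (fun i => K (T i (C x)) (T i (C' x))) r) :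
    HasSum (fun i => L (U i (D (θ x))) (U i (D' (θ x)))) (φ r) := by
  simpa only [kernel_apply_of_semiconj hK hT hC hC', Function.comp_def] using hr.map φ hφ

theorem controlled_star_operator_frame_transfer_general [Star R] [Star S] [StarHomClass F R S]
    [Preorder R] [Preorder S] [T2Space S] {a b : R} (hφ : Continuous φ) (hφ_mono : Monotone φ)
    (hK : ∀ x y, L (θ x) (θ y) = φ (K x y)) (hθ : Function.Surjective θ)
    (hT : ∀ i, Function.Semiconj θ (T i) (U i)) (hC : Function.Semiconj θ C D)
    (hC' : Function.Semiconj θ C' D') (hframe : IsControlledStarOperatorFrame K T C C' a b) :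
    IsControlledStarOperatorFrame L U D D' (φ a) (φ b) := by
  have hsum (x : X) : HasSum (fun i => L (U i (D (θ x))) (U i (D' (θ x))))
      (φ (∑' i, K (T i (C x)) (T i (C' x)))) :=
    hasSum_kernel_of_semiconj hφ hK hT hC hC' (hframe.summable x).hasSum
  have hconj (c : R) (x : X) : φ (c * K x x * star c) = φ c * L (θ x) (θ x) * star (φ c) := by
    rw [map_mul, map_mul, map_star, hK]
  refine ⟨hθ.forall.2 fun x => (hsum x).summable, hθ.forall.2 fun x => ?_,
    hθ.forall.2 fun x => ?_⟩
  · rw [(hsum x).tsum_eq, ← hconj]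
    exact hφ_mono (hframe.lower_bound x)
  · rw [(hsum x).tsum_eq, ← hconj]
    exact hφ_mono (hframe.upper_bound x)

end Transfer

/-- Let `(H, 𝒜, innA)` and `(H, ℬ, innB)` be Hilbert C*-modules on the same
space `H`, `φ : 𝒜 → ℬ` a ∗-homomorphism and `θ : H → H` a map with `innB (θx) (θy) = φ (innA x y)`.
If `{Tᵢ}` is a (C,C')-controlled ∗-operator frame over `𝒜` with bounds `a`, `b`, and `θ` is
surjective and commutes with every `Tᵢ`, with `C` and with `C'`, then `{Tᵢ}` is a
(C,C')-controlled ∗-operator frame over `ℬ` with bounds `φ a` and `φ b`. -/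
theorem controlled_star_operator_frame_transfer
    {𝒜 : Type*} [CStarAlgebra 𝒜] [PartialOrder 𝒜] [StarOrderedRing 𝒜]
    {ℬ : Type*} [CStarAlgebra ℬ] [PartialOrder ℬ] [StarOrderedRing ℬ]
    {H : Type*} [AddCommGroup H] [Module ℂ H]
    -- the 𝒜-valued and ℬ-valued inner products (pre-Hilbert module structures)
    (innA : H → H → 𝒜) (innB : H → H → ℬ)
    (hA_add : ∀ x y z : H, innA (x + y) z = innA x z + innA y z)
    (hA_star : ∀ x y : H, star (innA x y) = innA y x)
    (hA_pos : ∀ x : H, 0 ≤ innA x x)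
    (hA_def : ∀ x : H, innA x x = 0 ↔ x = 0)
    (hB_add : ∀ x y z : H, innB (x + y) z = innB x z + innB y z)
    (hB_star : ∀ x y : H, star (innB x y) = innB y x)
    (hB_pos : ∀ x : H, 0 ≤ innB x x)
    (hB_def : ∀ x : H, innB x x = 0 ↔ x = 0)
    -- φ is a ∗-homomorphism, θ intertwines the two inner products
    (φ : 𝒜 →⋆ₐ[ℂ] ℬ) (θ : H → H)
    (hθinn : ∀ x y : H, innB (θ x) (θ y) = φ (innA x y))
    -- the family of adjointable operators
    {I : Type*} (T Tadj : I → H → H)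
    (hadj : ∀ i (x y : H), innA (T i x) y = innA x (Tadj i y))
    -- C, C' ∈ GL⁺(H): positive, selfadjoint and invertible
    (C C' : H → H)
    (hCpos : ∀ x : H, 0 ≤ innA (C x) x)
    (hCsa : ∀ x y : H, innA (C x) y = innA x (C y))
    (hCinv : Function.Bijective C)
    (hC'pos : ∀ x : H, 0 ≤ innA (C' x) x)
    (hC'sa : ∀ x y : H, innA (C' x) y = innA x (C' y))
    (hC'inv : Function.Bijective C')
    -- (C,C')-controlled ∗-operator frame over 𝒜 with strictly nonzero bounds a, b
    (a b : 𝒜) (ha : a ≠ 0) (hb : b ≠ 0)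
    (hsumA : ∀ x : H, Summable fun i => innA (T i (C x)) (T i (C' x)))
    (hlow : ∀ x : H, a * innA x x * star a ≤ ∑' i, innA (T i (C x)) (T i (C' x)))
    (hupp : ∀ x : H, ∑' i, innA (T i (C x)) (T i (C' x)) ≤ b * innA x x * star b)
    -- θ is surjective and commutes with the Tᵢ, with C and with C'
    (hθsurj : Function.Surjective θ)
    (hθT : ∀ i (x : H), θ (T i x) = T i (θ x))
    (hθC : ∀ x : H, θ (C x) = C (θ x))
    (hθC' : ∀ x : H, θ (C' x) = C' (θ x)) :
    (∀ y : H, Summable fun i => innB (T i (C y)) (T i (C' y))) ∧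
      ∀ y : H,
        φ a * innB y y * star (φ a) ≤ ∑' i, innB (T i (C y)) (T i (C' y)) ∧
          ∑' i, innB (T i (C y)) (T i (C' y)) ≤ φ b * innB y y * star (φ b) := by
  have hframe := controlled_star_operator_frame_transfer_general (map_continuous φ)
    (OrderHomClass.mono φ) hθinn hθsurj hθT hθC hθC' ⟨hsumA, hlow, hupp⟩
  exact ⟨hframe.summable, fun y => ⟨hframe.lower_bound y, hframe.upper_bound y⟩⟩
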